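/- (Guard_NB for Needham–Schroeder–Lowe.) If evs ∈ nsl, A ∉ bad, B ∉ bad and Says B A (Crypt (pubK A) ⟨Nonce NA, Nonce NB, Agent B⟩) ∈ set evs, then Guard NB {priK A, priK B} (spies evs), i.e. the nonce NB is guarded in all traffic by the private keys of A and B. -/

import Mathlib

inductive agent : Type
  | Server : agent
  | Friend : ℕ → agent
  | Spy : agent
deriving DecidableEq

inductive msg : Type
  | Agent : agent → msg
  | Number : ℕ → msg
  | Nonce : ℕ → msg
  | Key : ℕ → msg
  | Hash : msg → msg
  | MPair : msg → msg → msg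
  | Crypt : ℕ → msg → msg
deriving DecidableEq

inductive partsP (H : Set msg) : msg → Prop
  | Inj : ∀ X, X ∈ H → partsP H X
  | Fst : ∀ X Y, partsP H (msg.MPair X Y) → partsP H X
  | Snd : ∀ X Y, partsP H (msg.MPair X Y) → partsP H Y
  | Body : ∀ K X, partsP H (msg.Crypt K X) → partsP H X

/-- `parts H`: sub-components of messages of `H`. -/
def parts (H : Set msg) : Set msg := {X | partsP H X}

inductive analzP (invKey : ℕ → ℕ) (H : Set msg) : msg → Prop
  | Inj : ∀ X, X ∈ H → analzP invKey H X
  | Fst : ∀ X Y, analzP invKey H (msg.MPair X Y) → analzP invKey H X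
  | Snd : ∀ X Y, analzP invKey H (msg.MPair X Y) → analzP invKey H Y
  | Decrypt : ∀ K X, analzP invKey H (msg.Crypt K X) →
      analzP invKey H (msg.Key (invKey K)) → analzP invKey H X

/-- `analz invKey H`: what can be obtained by decomposing and decrypting messages of `H`. -/
def analz (invKey : ℕ → ℕ) (H : Set msg) : Set msg := {X | analzP invKey H X}

inductive synthP (H : Set msg) : msg → Prop
  | Inj : ∀ X, X ∈ H → synthP H X
  | Ag : ∀ a, synthP H (msg.Agent a)
  | Num : ∀ n, synthP H (msg.Number n)
  | Hsh : ∀ X, synthP H X → synthP H (msg.Hash X)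
  | Pr : ∀ X Y, synthP H X → synthP H Y → synthP H (msg.MPair X Y)
  | Cry : ∀ K X, synthP H X → msg.Key K ∈ H → synthP H (msg.Crypt K X)

/-- `synth H`: messages that can be synthesized from `H`. -/
def synth (H : Set msg) : Set msg := {X | synthP H X}

inductive guardP (invKey : ℕ → ℕ) (n : ℕ) (Ks : Set ℕ) : msg → Prop
  | No_Nonce : ∀ X, msg.Nonce n ∉ parts {X} → guardP invKey n Ks X
  | Guard : ∀ K X, invKey K ∈ Ks → guardP invKey n Ks (msg.Crypt K X)
  | Cry : ∀ K X, guardP invKey n Ks X → guardP invKey n Ks (msg.Crypt K X)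
  | Pr : ∀ X Y, guardP invKey n Ks X → guardP invKey n Ks Y →
      guardP invKey n Ks (msg.MPair X Y)

/-- `guard n Ks`: messages in which `Nonce n` is guarded by the keys of `Ks`. -/
def guardMsg (invKey : ℕ → ℕ) (n : ℕ) (Ks : Set ℕ) : Set msg := {X | guardP invKey n Ks X}

/-- `Guard n Ks H`: every message of `H` lies in `guard n Ks`. -/
def Guard (invKey : ℕ → ℕ) (n : ℕ) (Ks : Set ℕ) (H : Set msg) : Prop :=
  ∀ X ∈ H, X ∈ guardMsg invKey n Ks
inductive event : Type
  | Says : agent → agent → msg → event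
deriving DecidableEq

def msgOf : event → msg
  | event.Says _ _ X => X

/-- Set of messages sent in a trace. -/
def sent (evs : List event) : Set msg :=
  {X | ∃ A B, event.Says A B X ∈ evs}
/-- Private key of an agent: the inverse of its public key. -/
def priK (invKey : ℕ → ℕ) (pubK : agent → ℕ) (A : agent) : ℕ := invKey (pubK A)

/-- Initial knowledge of each agent in a public-key infrastructure:
every agent knows its own private key and all public keys; the spy moreover
knows the private keys of the bad agents. -/
def initStatePK (invKey : ℕ → ℕ) (pubK : agent → ℕ) (bad : Set agent) : agent → Set msg :=
  fun A =>
    match A with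
    | agent.Spy =>
        {X | ∃ B ∈ bad, X = msg.Key (priK invKey pubK B)} ∪ {X | ∃ B, X = msg.Key (pubK B)}
    | _ => {msg.Key (priK invKey pubK A)} ∪ {X | ∃ B, X = msg.Key (pubK B)}

/-- `spies evs`: the private keys of the bad agents, all public keys, and
every message sent in `evs`. -/
def spiesPK (invKey : ℕ → ℕ) (pubK : agent → ℕ) (bad : Set agent) (evs : List event) :
    Set msg :=
  initStatePK invKey pubK bad agent.Spy ∪ sent evs

/-- `used evs`: parts of all agents' initial knowledge and of all messages sent in `evs`. -/
def usedPK (invKey : ℕ → ℕ) (pubK : agent → ℕ) (bad : Set agent) (evs : List event) :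
    Set msg :=
  parts ((⋃ A, initStatePK invKey pubK bad A) ∪ sent evs)
/-- The Needham–Schroeder–Lowe protocol. -/
inductive nsl (invKey : ℕ → ℕ) (pubK : agent → ℕ) (bad : Set agent) : List event → Prop
  | Nil : nsl invKey pubK bad []
  | Fake : ∀ evs B X, nsl invKey pubK bad evs →
      X ∈ synth (analz invKey (spiesPK invKey pubK bad evs)) →
      nsl invKey pubK bad (event.Says agent.Spy B X :: evs)
  | NS1 : ∀ evs A B NA, nsl invKey pubK bad evs →
      msg.Nonce NA ∉ usedPK invKey pubK bad evs →
      nsl invKey pubK bad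
        (event.Says A B (msg.Crypt (pubK B) (msg.MPair (msg.Nonce NA) (msg.Agent A))) :: evs)
  | NS2 : ∀ evs A A' B NA NB, nsl invKey pubK bad evs →
      msg.Nonce NB ∉ usedPK invKey pubK bad evs →
      event.Says A' B (msg.Crypt (pubK B) (msg.MPair (msg.Nonce NA) (msg.Agent A))) ∈ evs →
      nsl invKey pubK bad
        (event.Says B A (msg.Crypt (pubK A)
          (msg.MPair (msg.Nonce NA) (msg.MPair (msg.Nonce NB) (msg.Agent B)))) :: evs)
  | NS3 : ∀ evs A B B' NA NB, nsl invKey pubK bad evs →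
      event.Says A B (msg.Crypt (pubK B) (msg.MPair (msg.Nonce NA) (msg.Agent A))) ∈ evs →
      event.Says B' A (msg.Crypt (pubK A)
        (msg.MPair (msg.Nonce NA) (msg.MPair (msg.Nonce NB) (msg.Agent B)))) ∈ evs →
      nsl invKey pubK bad (event.Says A B (msg.Crypt (pubK B) (msg.Nonce NB)) :: evs)

def SubM (Z : msg) : msg → Prop
  | msg.MPair X Y => Z = msg.MPair X Y ∨ SubM Z X ∨ SubM Z Y
  | msg.Crypt K X => Z = msg.Crypt K X ∨ SubM Z X
  | msg.Agent a => Z = msg.Agent a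
  | msg.Number a => Z = msg.Number a
  | msg.Nonce a => Z = msg.Nonce a
  | msg.Key a => Z = msg.Key a
  | msg.Hash a => Z = msg.Hash a

theorem SubM_refl (X : msg) : SubM X X := by cases X <;> simp [SubM]

theorem SubM_fst {X Y : msg} : ∀ W, SubM (msg.MPair X Y) W → SubM X W ∧ SubM Y W := by
  intro W
  induction W with
  | MPair P Q h1 h2 =>
    simp only [SubM]
    rintro (h | h | h)
    · cases h; exact ⟨Or.inr (Or.inl (SubM_refl _)), Or.inr (Or.inr (SubM_refl _))⟩
    · exact ⟨Or.inr (Or.inl (h1 h).1), Or.inr (Or.inl (h1 h).2)⟩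
    · exact ⟨Or.inr (Or.inr (h2 h).1), Or.inr (Or.inr (h2 h).2)⟩
  | Crypt K P h1 =>
    simp only [SubM]
    rintro (h | h)
    · cases h
    · exact ⟨Or.inr (h1 h).1, Or.inr (h1 h).2⟩
  | _ => simp [SubM]

theorem SubM_body {K : ℕ} {X : msg} : ∀ W, SubM (msg.Crypt K X) W → SubM X W := by
  intro W
  induction W with
  | MPair P Q h1 h2 =>
    simp only [SubM]
    rintro (h | h | h)
    · cases h
    · exact Or.inr (Or.inl (h1 h))
    · exact Or.inr (Or.inr (h2 h))
  | Crypt K P h1 =>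
    simp only [SubM]
    rintro (h | h)
    · cases h; exact Or.inr (SubM_refl _)
    · exact Or.inr (h1 h)
  | _ => simp [SubM]

theorem SubM_parts {H : Set msg} {Z : msg} : ∀ W, SubM Z W → W ∈ parts H → Z ∈ parts H := by
  intro W
  induction W with
  | MPair P Q h1 h2 =>
    rintro (h | h | h) hp
    · subst h; exact hp
    · exact h1 h (partsP.Fst _ _ hp)
    · exact h2 h (partsP.Snd _ _ hp)
  | Crypt K P h1 =>
    rintro (h | h) hp
    · subst h; exact hp
    · exact h1 h (partsP.Body _ _ hp)
  | _ => intro h hp; simp only [SubM] at h; subst h; exact hp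

theorem mem_parts_iff {H : Set msg} {Z : msg} : Z ∈ parts H ↔ ∃ W ∈ H, SubM Z W := by
  constructor
  · intro h
    change partsP H Z at h
    induction h with
    | Inj X hX => exact ⟨X, hX, SubM_refl _⟩
    | Fst X Y _ ih => obtain ⟨W, hW, h⟩ := ih; exact ⟨W, hW, (SubM_fst _ h).1⟩
    | Snd X Y _ ih => obtain ⟨W, hW, h⟩ := ih; exact ⟨W, hW, (SubM_fst _ h).2⟩
    | Body K X _ ih => obtain ⟨W, hW, h⟩ := ih; exact ⟨W, hW, SubM_body _ h⟩
  · rintro ⟨W, hW, h⟩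
    exact SubM_parts W h (partsP.Inj _ hW)

theorem parts_single {X Z : msg} : Z ∈ parts {X} ↔ SubM Z X := by
  simp [mem_parts_iff]

theorem analz_parts {invKey : ℕ → ℕ} {H : Set msg} {Z : msg} (h : Z ∈ analz invKey H) :
    Z ∈ parts H := by
  change analzP invKey H Z at h
  induction h with
  | Inj X hX => exact partsP.Inj _ hX
  | Fst X Y _ ih => exact partsP.Fst _ _ ih
  | Snd X Y _ ih => exact partsP.Snd _ _ ih
  | Decrypt K X _ _ ih _ => exact partsP.Body _ _ ih

theorem analz_mono {invKey : ℕ → ℕ} {H G : Set msg} {Z : msg} (hs : H ⊆ G)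
    (h : Z ∈ analz invKey H) : Z ∈ analz invKey G := by
  change analzP invKey H Z at h
  induction h with
  | Inj X hX => exact analzP.Inj _ (hs hX)
  | Fst X Y _ ih => exact analzP.Fst _ _ ih
  | Snd X Y _ ih => exact analzP.Snd _ _ ih
  | Decrypt K X _ _ ih ih2 => exact analzP.Decrypt _ _ ih ih2

theorem fake_parts {invKey : ℕ → ℕ} {H : Set msg} {X Z : msg}
    (h : X ∈ synth (analz invKey H)) (hz : SubM Z X) :
    Z ∈ parts H ∨ Z ∈ synth (analz invKey H) := by
  change synthP (analz invKey H) X at h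
  induction h with
  | Inj X hX => exact Or.inl (SubM_parts _ hz (analz_parts hX))
  | Ag a => cases hz; exact Or.inr (synthP.Ag _)
  | Num a => cases hz; exact Or.inr (synthP.Num _)
  | Hsh X hX _ => cases hz; exact Or.inr (synthP.Hsh _ hX)
  | Pr X Y hX hY h1 h2 =>
    rcases hz with h | h | h
    · subst h; exact Or.inr (synthP.Pr _ _ hX hY)
    · exact h1 h
    · exact h2 h
  | Cry K X hX hK h1 =>
    rcases hz with h | h
    · subst h; exact Or.inr (synthP.Cry _ _ hX hK)
    · exact h1 h

theorem synth_nonce {H : Set msg} {n : ℕ} (h : msg.Nonce n ∈ synth H) : msg.Nonce n ∈ H := by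
  cases h; assumption

theorem synth_key {H : Set msg} {n : ℕ} (h : msg.Key n ∈ synth H) : msg.Key n ∈ H := by
  cases h; assumption

theorem fake_ns1 {invKey : ℕ → ℕ} {H : Set msg} {X Y : msg} {K n : ℕ}
    (h : X ∈ synth (analz invKey H)) (hn : msg.Nonce n ∉ analz invKey H)
    (hz : SubM (msg.Crypt K (msg.MPair (msg.Nonce n) Y)) X) :
    msg.Crypt K (msg.MPair (msg.Nonce n) Y) ∈ parts H := by
  rcases fake_parts h hz with h | h
  · exact h
  · cases h with
    | Inj _ h => exact analz_parts h
    | Cry _ _ h _ =>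
      cases h with
      | Inj _ h => exact absurd (analzP.Fst _ _ h) hn
      | Pr _ _ h1 h2 => exact absurd (synth_nonce h1) hn

theorem fake_ns2 {invKey : ℕ → ℕ} {H : Set msg} {X Y W : msg} {K n : ℕ}
    (h : X ∈ synth (analz invKey H)) (hn : msg.Nonce n ∉ analz invKey H)
    (hz : SubM (msg.Crypt K (msg.MPair W (msg.MPair (msg.Nonce n) Y))) X) :
    msg.Crypt K (msg.MPair W (msg.MPair (msg.Nonce n) Y)) ∈ parts H := by
  rcases fake_parts h hz with h | h
  · exact h
  · cases h with
    | Inj _ h => exact analz_parts h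
    | Cry _ _ h _ =>
      cases h with
      | Inj _ h => exact absurd (analzP.Fst _ _ (analzP.Snd _ _ h)) hn
      | Pr _ _ _ h =>
        cases h with
        | Inj _ h => exact absurd (analzP.Fst _ _ h) hn
        | Pr _ _ h1 h2 => exact absurd (synth_nonce h1) hn

theorem not_guard_nonce {invKey : ℕ → ℕ} {n : ℕ} {Ks : Set ℕ}
    (h : guardP invKey n Ks (msg.Nonce n)) : False := by
  cases h with
  | No_Nonce _ h => exact h (partsP.Inj _ rfl)

theorem guard_analz {invKey : ℕ → ℕ} {n : ℕ} {Ks : Set ℕ} {H : Set msg} {X : msg}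
    (hG : Guard invKey n Ks H) (hK : ∀ k ∈ Ks, msg.Key k ∉ analz invKey H)
    (h : X ∈ analz invKey H) : guardP invKey n Ks X := by
  change analzP invKey H X at h
  induction h with
  | Inj X hX => exact hG _ hX
  | Fst X Y _ ih =>
    cases ih with
    | No_Nonce _ h =>
      refine guardP.No_Nonce _ fun h' => h ?_
      rw [parts_single] at *; exact Or.inr (Or.inl h')
    | Pr _ _ h1 h2 => exact h1
  | Snd X Y _ ih =>
    cases ih with
    | No_Nonce _ h =>
      refine guardP.No_Nonce _ fun h' => h ?_
      rw [parts_single] at *; exact Or.inr (Or.inr h')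
    | Pr _ _ h1 h2 => exact h2
  | Decrypt K X _ hk ih _ =>
    cases ih with
    | No_Nonce _ h =>
      refine guardP.No_Nonce _ fun h' => h ?_
      rw [parts_single] at *; exact Or.inr h'
    | Guard _ _ h => exact absurd hk (hK _ h)
    | Cry _ _ h => exact h

theorem guard_synth {invKey : ℕ → ℕ} {n : ℕ} {Ks : Set ℕ} {H : Set msg} {X : msg}
    (hG : ∀ X ∈ H, guardP invKey n Ks X)
    (h : X ∈ synth H) : guardP invKey n Ks X := by
  change synthP H X at h
  induction h with
  | Inj X hX => exact hG _ hX
  | Ag a => exact guardP.No_Nonce _ (by simp [parts_single, SubM])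
  | Num a => exact guardP.No_Nonce _ (by simp [parts_single, SubM])
  | Hsh a => exact guardP.No_Nonce _ (by simp [parts_single, SubM])
  | Pr X Y _ _ h1 h2 => exact guardP.Pr _ _ h1 h2
  | Cry K X _ _ h => exact guardP.Cry _ _ h

theorem spies_mono {invKey : ℕ → ℕ} {pubK : agent → ℕ} {bad : Set agent} (e : event)
    (evs : List event) : spiesPK invKey pubK bad evs ⊆ spiesPK invKey pubK bad (e :: evs) := by
  rintro X (h | ⟨A, B, h⟩)
  · exact Or.inl h
  · exact Or.inr ⟨A, B, List.mem_cons_of_mem _ h⟩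

theorem mem_spies_cons {invKey : ℕ → ℕ} {pubK : agent → ℕ} {bad : Set agent} {A B : agent}
    {X Z : msg} {evs : List event} (h : Z ∈ spiesPK invKey pubK bad (event.Says A B X :: evs)) :
    Z = X ∨ Z ∈ spiesPK invKey pubK bad evs := by
  rcases h with h | ⟨C, D, h⟩
  · exact Or.inr (Or.inl h)
  · rcases List.mem_cons.1 h with h | h
    · cases h; exact Or.inl rfl
    · exact Or.inr (Or.inr ⟨C, D, h⟩)

theorem parts_spies_cons {invKey : ℕ → ℕ} {pubK : agent → ℕ} {bad : Set agent} {A B : agent}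
    {X Z : msg} {evs : List event}
    (h : Z ∈ parts (spiesPK invKey pubK bad (event.Says A B X :: evs))) :
    SubM Z X ∨ Z ∈ parts (spiesPK invKey pubK bad evs) := by
  obtain ⟨W, hW, hs⟩ := mem_parts_iff.1 h
  rcases mem_spies_cons hW with e | hW
  · exact Or.inl (e ▸ hs)
  · exact Or.inr (mem_parts_iff.2 ⟨W, hW, hs⟩)

theorem parts_init {invKey : ℕ → ℕ} {pubK : agent → ℕ} {bad : Set agent} {Z : msg}
    (h : Z ∈ parts (spiesPK invKey pubK bad [])) :
    (∃ B ∈ bad, Z = msg.Key (priK invKey pubK B)) ∨ ∃ B, Z = msg.Key (pubK B) := by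
  obtain ⟨W, hW, h⟩ := mem_parts_iff.1 h
  rcases hW with (⟨B, hB, rfl⟩ | ⟨B, rfl⟩) | ⟨A, B, hh⟩
  · exact Or.inl ⟨B, hB, h⟩
  · exact Or.inr ⟨B, h⟩
  · simp at hh

theorem parts_used {invKey : ℕ → ℕ} {pubK : agent → ℕ} {bad : Set agent} {Z : msg}
    {evs : List event} (h : Z ∈ parts (spiesPK invKey pubK bad evs)) :
    Z ∈ usedPK invKey pubK bad evs := by
  obtain ⟨W, hW, h⟩ := mem_parts_iff.1 h
  refine mem_parts_iff.2 ⟨W, ?_, h⟩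
  rcases hW with hW | hW
  · exact Or.inl (Set.mem_iUnion.2 ⟨_, hW⟩)
  · exact Or.inr hW

theorem says_parts {invKey : ℕ → ℕ} {pubK : agent → ℕ} {bad : Set agent} {Z : msg}
    {evs : List event} {A B : agent} (h : event.Says A B Z ∈ evs) :
    Z ∈ parts (spiesPK invKey pubK bad evs) :=
  partsP.Inj _ (Or.inr ⟨A, B, h⟩)

theorem parts_key {invKey : ℕ → ℕ} {pubK : agent → ℕ} {bad : Set agent} {evs : List event}
    (hevs : nsl invKey pubK bad evs) (k : ℕ)
    (h : msg.Key k ∈ parts (spiesPK invKey pubK bad evs)) :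
    (∃ B ∈ bad, k = priK invKey pubK B) ∨ ∃ B, k = pubK B := by
  induction hevs with
  | Nil => simpa using parts_init h
  | Fake evs B X _ hX ih =>
    rcases parts_spies_cons h with h | h
    · rcases fake_parts hX h with h | h
      · exact ih h
      · exact ih (analz_parts (synth_key h))
    · exact ih h
  | NS1 evs A B NA _ _ ih =>
    rcases parts_spies_cons h with h | h
    · simp [SubM] at h
    · exact ih h
  | NS2 evs A A' B NA NB _ _ _ ih =>
    rcases parts_spies_cons h with h | h
    · simp [SubM] at h
    · exact ih h
  | NS3 evs A A' B NA NB _ _ _ ih =>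
    rcases parts_spies_cons h with h | h
    · simp [SubM] at h
    · exact ih h

theorem no_ns1_ns2 {invKey : ℕ → ℕ} {pubK : agent → ℕ} {bad : Set agent} {evs : List event}
    (hevs : nsl invKey pubK bad evs) (n K K' : ℕ) (Y W Y' : msg) (a d : agent)
    (hY : Y = msg.Agent a) (hY' : Y' = msg.Agent d)
    (hn : msg.Nonce n ∉ analz invKey (spiesPK invKey pubK bad evs))
    (h1 : msg.Crypt K (msg.MPair (msg.Nonce n) Y) ∈ parts (spiesPK invKey pubK bad evs))
    (h2 : msg.Crypt K' (msg.MPair W (msg.MPair (msg.Nonce n) Y')) ∈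
      parts (spiesPK invKey pubK bad evs)) : False := by
  subst hY hY'
  induction hevs with
  | Nil => simpa using parts_init h1
  | Fake evs B X _ hX ih =>
    have hn' := fun h => hn (analz_mono (spies_mono _ _) h)
    refine ih hn' ?_ ?_
    · rcases parts_spies_cons h1 with h | h
      · exact fake_ns1 hX hn' h
      · exact h
    · rcases parts_spies_cons h2 with h | h
      · exact fake_ns2 hX hn' h
      · exact h
  | NS1 evs A B NA _ hf ih =>
    have hn' := fun h => hn (analz_mono (spies_mono _ _) h)
    replace h2 := parts_spies_cons h2
    rcases h2 with h2 | h2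
    · simp [SubM] at h2
    replace h1 := parts_spies_cons h1
    rcases h1 with h1 | h1
    · simp [SubM] at h1
      obtain ⟨-, rfl, -⟩ := h1
      exact hf (parts_used (partsP.Fst _ _ (partsP.Snd _ _ (partsP.Body _ _ h2))))
    · exact ih hn' h1 h2
  | NS2 evs A A' B NA NB _ hf _ ih =>
    have hn' := fun h => hn (analz_mono (spies_mono _ _) h)
    replace h1 := parts_spies_cons h1
    rcases h1 with h1 | h1
    · simp [SubM] at h1
    replace h2 := parts_spies_cons h2
    rcases h2 with h2 | h2
    · simp [SubM] at h2
      obtain ⟨-, -, rfl, -⟩ := h2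
      exact hf (parts_used (partsP.Fst _ _ (partsP.Body _ _ h1)))
    · exact ih hn' h1 h2
  | NS3 evs A A' B NA NB _ _ _ ih =>
    have hn' := fun h => hn (analz_mono (spies_mono _ _) h)
    replace h1 := parts_spies_cons h1
    rcases h1 with h1 | h1
    · simp [SubM] at h1
    replace h2 := parts_spies_cons h2
    rcases h2 with h2 | h2
    · simp [SubM] at h2
    · exact ih hn' h1 h2

theorem uniq_ns2 {invKey : ℕ → ℕ} {pubK : agent → ℕ} {bad : Set agent} {evs : List event}
    (hevs : nsl invKey pubK bad evs) (n K K' : ℕ) (W W' : msg) (a d : agent)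
    (hn : msg.Nonce n ∉ analz invKey (spiesPK invKey pubK bad evs))
    (h1 : msg.Crypt K (msg.MPair W (msg.MPair (msg.Nonce n) (msg.Agent a))) ∈
      parts (spiesPK invKey pubK bad evs))
    (h2 : msg.Crypt K' (msg.MPair W' (msg.MPair (msg.Nonce n) (msg.Agent d))) ∈
      parts (spiesPK invKey pubK bad evs)) : K = K' ∧ a = d := by
  induction hevs with
  | Nil => simpa using parts_init h1
  | Fake evs B X _ hX ih =>
    have hn' := fun h => hn (analz_mono (spies_mono _ _) h)
    refine ih hn' ?_ ?_
    · rcases parts_spies_cons h1 with h | h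
      · exact fake_ns2 hX hn' h
      · exact h
    · rcases parts_spies_cons h2 with h | h
      · exact fake_ns2 hX hn' h
      · exact h
  | NS1 evs A B NA _ hf ih =>
    have hn' := fun h => hn (analz_mono (spies_mono _ _) h)
    replace h2 := parts_spies_cons h2
    rcases h2 with h2 | h2
    · simp [SubM] at h2
    replace h1 := parts_spies_cons h1
    rcases h1 with h1 | h1
    · simp [SubM] at h1
    · exact ih hn' h1 h2
  | NS2 evs A A' B NA NB _ hf _ ih =>
    have hn' := fun h => hn (analz_mono (spies_mono _ _) h)
    replace h1 := parts_spies_cons h1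
    rcases h1 with h1 | h1
    · simp [SubM] at h1
      obtain ⟨rfl, -, rfl, rfl⟩ := h1
      replace h2 := parts_spies_cons h2
      rcases h2 with h2 | h2
      · simp [SubM] at h2
        exact ⟨h2.1.symm, h2.2.2.symm⟩
      · exact absurd (parts_used (partsP.Fst _ _ (partsP.Snd _ _ (partsP.Body _ _ h2)))) hf
    · replace h2 := parts_spies_cons h2
      rcases h2 with h2 | h2
      · simp [SubM] at h2
        obtain ⟨rfl, -, rfl, rfl⟩ := h2
        exact absurd (parts_used (partsP.Fst _ _ (partsP.Snd _ _ (partsP.Body _ _ h1)))) hf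
      · exact ih hn' h1 h2
  | NS3 evs A A' B NA NB _ _ _ ih =>
    have hn' := fun h => hn (analz_mono (spies_mono _ _) h)
    replace h1 := parts_spies_cons h1
    rcases h1 with h1 | h1
    · simp [SubM] at h1
    replace h2 := parts_spies_cons h2
    rcases h2 with h2 | h2
    · simp [SubM] at h2
    · exact ih hn' h1 h2

theorem guard_cons {invKey : ℕ → ℕ} {pubK : agent → ℕ} {bad : Set agent} {A B : agent}
    {X : msg} {evs : List event} {n : ℕ} {Ks : Set ℕ}
    (hG : Guard invKey n Ks (spiesPK invKey pubK bad evs)) (hX : guardP invKey n Ks X) :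
    Guard invKey n Ks (spiesPK invKey pubK bad (event.Says A B X :: evs)) := by
  intro Z hZ
  rcases mem_spies_cons hZ with rfl | h
  · exact hX
  · exact hG _ h

/-- `Guard_NB` for Needham–Schroeder–Lowe. -/
theorem Guard_NB
    (invKey : ℕ → ℕ) (pubK : agent → ℕ) (bad : Set agent)
    (hinv : ∀ K, invKey (invKey K) = K)
    (hpub : Function.Injective pubK)
    (hpri : Function.Injective (priK invKey pubK))
    (hpubpri : ∀ A B : agent, pubK A ≠ priK invKey pubK B)
    (hspy : agent.Spy ∈ bad)
    (evs : List event) (A B : agent) (NA NB : ℕ)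
    (hevs : nsl invKey pubK bad evs) (hA : A ∉ bad) (hB : B ∉ bad)
    (hsays : event.Says B A (msg.Crypt (pubK A)
      (msg.MPair (msg.Nonce NA) (msg.MPair (msg.Nonce NB) (msg.Agent B)))) ∈ evs) :
    Guard invKey NB {priK invKey pubK A, priK invKey pubK B} (spiesPK invKey pubK bad evs) := by
  have hkey : ∀ evs, nsl invKey pubK bad evs →
      ∀ k ∈ ({priK invKey pubK A, priK invKey pubK B} : Set ℕ),
      msg.Key k ∉ analz invKey (spiesPK invKey pubK bad evs) := by
    intro evs hevs k hk h
    have hk' : ∃ C, C ∉ bad ∧ k = priK invKey pubK C := by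
      rcases hk with hk | hk
      · exact ⟨A, hA, hk⟩
      · exact ⟨B, hB, hk⟩
    obtain ⟨C, hC, rfl⟩ := hk'
    rcases parts_key hevs _ (analz_parts h) with ⟨D, hD, e⟩ | ⟨D, e⟩
    · exact hC (hpri e ▸ hD)
    · exact hpubpri _ _ e.symm
  have hnon : ∀ evs, nsl invKey pubK bad evs →
      Guard invKey NB {priK invKey pubK A, priK invKey pubK B} (spiesPK invKey pubK bad evs) →
      msg.Nonce NB ∉ analz invKey (spiesPK invKey pubK bad evs) :=
    fun evs hevs hG h => not_guard_nonce (guard_analz hG (hkey evs hevs) h)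
  induction hevs with
  | Nil => simp at hsays
  | Fake evs C X hevs hX ih =>
    rcases List.mem_cons.1 hsays with h | h
    · cases h; exact absurd hspy hB
    · exact guard_cons (ih h) (guard_synth (fun X hX => guard_analz (ih h) (hkey evs hevs) hX) hX)
  | NS1 evs A' B' NA' hevs hf ih =>
    rcases List.mem_cons.1 hsays with h | h
    · simp at h
    · refine guard_cons (ih h) (guardP.No_Nonce _ ?_)
      simp only [parts_single, SubM]
      simp
      rintro rfl
      exact hf (parts_used (partsP.Fst _ _ (partsP.Snd _ _ (partsP.Body _ _ (says_parts h)))))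
  | NS2 evs A' C B' NA' NB' hevs hf hm ih =>
    rcases List.mem_cons.1 hsays with h | h
    · cases h
      refine guard_cons ?_ (guardP.Guard _ _ (Or.inl rfl))
      intro X hX
      refine guardP.No_Nonce _ fun h => hf (parts_used ?_)
      exact SubM_parts _ (parts_single.1 h) (partsP.Inj _ hX)
    · refine guard_cons (ih h) (guardP.No_Nonce _ ?_)
      simp only [parts_single, SubM]
      simp
      constructor
      · rintro rfl
        exact no_ns1_ns2 hevs _ _ _ _ _ _ _ _ rfl rfl (hnon evs hevs (ih h))
          (says_parts hm) (says_parts h)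
      · rintro rfl
        exact hf (parts_used (partsP.Fst _ _ (partsP.Snd _ _ (partsP.Body _ _ (says_parts h)))))
  | NS3 evs A' B' C NA' NB' hevs hm1 hm2 ih =>
    rcases List.mem_cons.1 hsays with h | h
    · simp at h
    · refine guard_cons (ih h) ?_
      by_cases e : NB' = NB
      · subst e
        obtain ⟨-, rfl⟩ := uniq_ns2 hevs _ _ _ _ _ _ _ (hnon evs hevs (ih h))
          (says_parts hm2) (says_parts h)
        exact guardP.Guard _ _ (Or.inr rfl)
      · refine guardP.No_Nonce _ ?_
        simp only [parts_single, SubM]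
        simp
        exact fun h => e h.symm
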